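/- ψ(1/8) = −γ − (1 + √2)·(π/2) − 4·ln 2 − √2·ln(1 + √2), where ψ is the digamma function and γ is the Euler–Mascheroni constant. -/

import Mathlib

/-!
The recurrence `ψ(x + 1) = ψ(x) + 1 / x` and the asymptotics `ψ(x) = log x + o(1)`, which comes from
the convexity of `log Γ`, give `ψ(x) = lim (log n - ∑_{k < n} 1 / (x + k))`. For `x = p / q` the sum
runs over a residue class modulo `q`, so filtering by a primitive `q`-th root of unity `ζ` splits it
into a harmonic sum and partial sums of the series `∑ ζ^{jm} / m = -log (1 - ζ^j)`. Evaluating these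
logarithms gives Gauss's digamma theorem, of which `x = 1 / 8` is an instance.
-/

noncomputable def digamma (x : ℝ) : ℝ := deriv Real.Gamma x / Real.Gamma x

open Filter Finset Real Topology

theorem hasDerivAt_log_comp_Gamma {x : ℝ} (hx : 0 < x) :
    HasDerivAt (log ∘ Gamma) (digamma x) x := by
  have hGamma : DifferentiableAt ℝ Gamma x :=
    differentiableAt_Gamma fun m => by linarith [m.cast_nonneg (α := ℝ)]
  exact hGamma.hasDerivAt.log (Gamma_pos_of_pos hx).ne'

theorem log_Gamma_add_one {x : ℝ} (hx : 0 < x) : log (Gamma (x + 1)) = log (Gamma x) + log x := by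
  rw [Gamma_add_one hx.ne', log_mul hx.ne' (Gamma_pos_of_pos hx).ne', add_comm]

theorem digamma_add_one {x : ℝ} (hx : 0 < x) : digamma (x + 1) = digamma x + 1 / x := by
  have hshift := (hasDerivAt_log_comp_Gamma (by linarith : 0 < x + 1)).comp_add_const x 1
  have hsum := (hasDerivAt_log_comp_Gamma hx).add (hasDerivAt_log hx.ne')
  rw [one_div]
  refine hshift.unique (hsum.congr_of_eventuallyEq ?_)
  filter_upwards [lt_mem_nhds hx] with y hy using log_Gamma_add_one hy

theorem digamma_add_natCast {x : ℝ} (hx : 0 < x) (n : ℕ) :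
    digamma (x + n) = digamma x + ∑ k ∈ range n, 1 / (x + k) := by
  induction n with
  | zero => simp
  | succ n ih =>
    rw [sum_range_succ, ← add_assoc, ← ih, ← digamma_add_one (by positivity), Nat.cast_succ,
      add_assoc]

theorem digamma_le_log {x : ℝ} (hx : 0 < x) : digamma x ≤ log x := by
  have h := convexOn_log_Gamma.le_slope_of_hasDerivAt (Set.mem_Ioi.2 hx)
    (Set.mem_Ioi.2 (by linarith : 0 < x + 1)) (lt_add_one x) (hasDerivAt_log_comp_Gamma hx)
  simpa [slope_def_field, log_Gamma_add_one hx] using h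

theorem log_le_digamma_add_one {x : ℝ} (hx : 0 < x) : log x ≤ digamma (x + 1) := by
  have hx' : 0 < x + 1 := by linarith
  have h := convexOn_log_Gamma.slope_le_of_hasDerivAt (Set.mem_Ioi.2 hx)
    (Set.mem_Ioi.2 hx') (lt_add_one x) (hasDerivAt_log_comp_Gamma hx')
  simpa [slope_def_field, log_Gamma_add_one hx] using h

theorem tendsto_digamma_sub_log_atTop :
    Tendsto (fun x : ℝ => digamma x - log x) atTop (𝓝 0) := by
  have hlower : Tendsto (fun x : ℝ => -(1 / x)) atTop (𝓝 0) := by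
    simpa using (tendsto_inv_atTop_zero (𝕜 := ℝ)).neg
  refine tendsto_of_tendsto_of_tendsto_of_le_of_le' hlower tendsto_const_nhds ?_ ?_
  · filter_upwards [eventually_gt_atTop 0] with x hx
    linarith [log_le_digamma_add_one hx, digamma_add_one hx]
  · filter_upwards [eventually_gt_atTop 0] with x hx
    linarith [digamma_le_log hx]

theorem tendsto_log_sub_sum_range_one_div {x : ℝ} (hx : 0 < x) :
    Tendsto (fun n : ℕ => log n - ∑ k ∈ range n, 1 / (x + k)) atTop (𝓝 (digamma x)) := by
  have hcast := tendsto_natCast_atTop_atTop (R := ℝ)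
  have hdigamma := tendsto_digamma_sub_log_atTop.comp (tendsto_atTop_add_const_left _ x hcast)
  have hlog := (tendsto_log_comp_add_sub_log x).comp hcast
  have h := (hdigamma.add hlog).const_sub (digamma x)
  rw [add_zero, sub_zero] at h
  refine h.congr fun n => ?_
  simp only [Function.comp_apply, digamma_add_natCast hx, add_comm (n : ℝ) x]
  ring

theorem sum_range_mul_ite_modEq {M : Type*} [AddCommMonoid M] (f : ℕ → M) {p q : ℕ} (hpq : p < q)
    (n : ℕ) :
    ∑ m ∈ range (q * n), (if m ≡ p [MOD q] then f m else 0) = ∑ k ∈ range n, f (q * k + p) := by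
  induction n with
  | zero => simp
  | succ n ih =>
    have hmod : ∀ r ∈ range q, q * n + r ≡ p [MOD q] ↔ r = p := fun r hr => by
      simp [Nat.ModEq, Nat.mod_eq_of_lt (mem_range.1 hr), Nat.mod_eq_of_lt hpq]
    rw [mul_add_one, sum_range_add, ih, sum_range_succ]
    congr 1
    rw [sum_congr rfl fun r hr => if_congr (hmod r hr) rfl rfl, sum_ite_eq',
      if_pos (mem_range.2 hpq)]

theorem sum_range_inv_pow_mul_pow {K : Type*} [Field K] {ζ : K} {q : ℕ} (hζ : IsPrimitiveRoot ζ q)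
    (m p : ℕ) :
    ∑ j ∈ range q, (ζ ^ p)⁻¹ ^ j * (ζ ^ j) ^ m = if m ≡ p [MOD q] then (q : K) else 0 := by
  obtain rfl | hq := eq_or_ne q 0
  · simp
  have hterm (j : ℕ) : (ζ ^ p)⁻¹ ^ j * (ζ ^ j) ^ m = (ζ ^ m / ζ ^ p) ^ j := by
    rw [pow_right_comm, ← mul_pow, div_eq_mul_inv, mul_comm]
  have hζp : ζ ^ p ≠ 0 := pow_ne_zero _ (hζ.ne_zero hq)
  have hmod : ζ ^ m / ζ ^ p = 1 ↔ m ≡ p [MOD q] := by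
    rw [div_eq_one_iff_eq hζp, hζ.eq_orderOf]
    exact (hζ.isOfFinOrder hq).pow_eq_pow_iff_modEq
  simp only [hterm]
  split_ifs with h
  · simp [hmod.2 h]
  · rw [geom_sum_eq (mt hmod.1 h), div_pow, pow_right_comm, pow_right_comm ζ p, hζ.pow_eq_one]
    simp

theorem mul_sum_range_eq_sum_inv_pow_mul {K : Type*} [Field K] {ζ : K} {p q : ℕ}
    (hζ : IsPrimitiveRoot ζ q) (hpq : p < q) (f : ℕ → K) (n : ℕ) :
    q * ∑ k ∈ range n, f (q * k + p) =
      ∑ j ∈ range q, (ζ ^ p)⁻¹ ^ j * ∑ m ∈ range (q * n), (ζ ^ j) ^ m * f m := by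
  simp_rw [← sum_range_mul_ite_modEq f hpq, mul_sum, mul_ite, mul_zero]
  rw [sum_comm]
  refine sum_congr rfl fun m _ => ?_
  simp_rw [← mul_assoc, ← sum_mul, sum_range_inv_pow_mul_pow hζ, ite_mul, zero_mul]

theorem sum_Ico_one_pow {K : Type*} [Field K] {z : K} {n : ℕ} (hn : 0 < n) (hz : z ≠ 1)
    (hzn : z ^ n = 1) : ∑ j ∈ Ico 1 n, z ^ j = -1 := by
  have h := geom_sum_eq hz n
  rw [hzn, sub_self, zero_div, range_eq_Ico, sum_eq_sum_Ico_succ_bot hn, pow_zero] at h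
  exact (neg_eq_of_add_eq_zero_right h).symm

theorem sum_range_natCast_mul_pow_mul_sub_one {R : Type*} [CommRing R] (z : R) (n : ℕ) :
    (∑ j ∈ range n, j * z ^ j) * (z - 1) = n * z ^ n - z * ∑ j ∈ range n, z ^ j := by
  induction n with
  | zero => simp
  | succ n ih =>
    rw [sum_range_succ, sum_range_succ, add_mul, ih]
    push_cast
    ring

theorem sum_Ico_one_natCast_mul_pow {K : Type*} [Field K] {z : K} {n : ℕ} (hz : z ≠ 1)
    (hzn : z ^ n = 1) : ∑ j ∈ Ico 1 n, j * z ^ j = n / (z - 1) := by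
  obtain rfl | hn := n.eq_zero_or_pos
  · simp
  have hrange : ∑ j ∈ Ico 1 n, j * z ^ j = ∑ j ∈ range n, j * z ^ j := by
    rw [range_eq_Ico, sum_eq_sum_Ico_succ_bot hn]
    simp
  rw [hrange, eq_div_iff (sub_ne_zero.2 hz), sum_range_natCast_mul_pow_mul_sub_one,
    geom_sum_eq hz, hzn]
  simp

theorem one_sub_mem_slitPlane {z : ℂ} (hz : ‖z‖ ≤ 1) (hz1 : z ≠ 1) : 1 - z ∈ Complex.slitPlane := by
  have hre : z.re ≤ 1 := (Complex.re_le_norm z).trans hz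
  refine Or.inl (sub_pos.2 (hre.lt_of_ne fun hre1 => hz1 ?_))
  have hnorm : z.re = ‖z‖ := le_antisymm (Complex.re_le_norm z) (hz.trans_eq hre1.symm)
  exact Complex.ext hre1 (Complex.re_eq_norm.1 hnorm).2.symm

-- The term `m = 0` of `∑ z ^ m / m` is `1 / 0 = 0`.
theorem cauchySeq_sum_range_pow_div {z : ℂ} (hz : ‖z‖ ≤ 1) (hz1 : z ≠ 1) :
    CauchySeq fun n : ℕ => ∑ m ∈ range n, z ^ m / m := by
  have hbound (n : ℕ) : ‖∑ m ∈ range n, z ^ (m + 1)‖ ≤ 2 / ‖z - 1‖ := by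
    have hpow : ‖z ^ n - 1‖ ≤ 2 :=
      calc ‖z ^ n - 1‖ ≤ ‖z ^ n‖ + ‖(1 : ℂ)‖ := norm_sub_le _ _
        _ ≤ 2 := by rw [norm_pow, norm_one]; linarith [pow_le_one₀ (n := n) (norm_nonneg z) hz]
    rw [← sum_congr rfl fun m _ => (pow_succ z m).symm, ← sum_mul, norm_mul, geom_sum_eq hz1,
      norm_div]
    exact (mul_le_of_le_one_right (by positivity) hz).trans (by gcongr)
  have hanti : Antitone fun m : ℕ => 1 / ((m : ℝ) + 1) := fun _ _ h => by
    dsimp only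
    gcongr
  rw [← cauchySeq_shift 1]
  convert! hanti.cauchySeq_series_mul_of_tendsto_zero_of_bounded
    tendsto_one_div_add_atTop_nhds_zero_nat hbound using 2 with n
  simp [sum_range_succ', div_eq_inv_mul]

theorem tendsto_sum_range_pow_div {z : ℂ} (hz : ‖z‖ ≤ 1) (hz1 : z ≠ 1) :
    Tendsto (fun n : ℕ => ∑ m ∈ range n, z ^ m / m) atTop (𝓝 (-Complex.log (1 - z))) := by
  obtain ⟨l, hl⟩ := cauchySeq_tendsto_of_complete (cauchySeq_sum_range_pow_div hz hz1)
  have habel := tendsto_map'_iff.1 (Complex.tendsto_tsum_powerSeries_nhdsWithin_lt hl)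
  have hlog : Tendsto (fun x : ℝ => -Complex.log (1 - z * x)) (𝓝[<] 1)
      (𝓝 (-Complex.log (1 - z))) := by
    have hcont : ContinuousAt (fun x : ℝ => -Complex.log (1 - z * x)) 1 := by
      refine (ContinuousAt.clog (by fun_prop) ?_).neg
      simpa using one_sub_mem_slitPlane hz hz1
    simpa using hcont.tendsto.mono_left nhdsWithin_le_nhds
  suffices h : l = -Complex.log (1 - z) from h ▸ hl
  refine tendsto_nhds_unique (habel.congr' ?_) hlog
  filter_upwards [Ioo_mem_nhdsLT zero_lt_one] with x hx
  have hzx : ‖z * x‖ < 1 := by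
    rw [norm_mul, Complex.norm_of_nonneg hx.1.le]
    exact (mul_le_of_le_one_left hx.1.le hz).trans_lt hx.2
  rw [Function.comp_apply, ← (Complex.hasSum_taylorSeries_neg_log hzx).tsum_eq]
  simp_rw [mul_pow, mul_div_right_comm]

theorem tendsto_sum_range_inv_sub_log :
    Tendsto (fun n : ℕ => ∑ m ∈ range n, (m : ℝ)⁻¹ - log n) atTop (𝓝 eulerMascheroniConstant) := by
  refine (tendsto_add_atTop_iff_nat 1).1 (tendsto_harmonic_sub_log_add_one.congr fun n => ?_)
  simp [sum_range_succ', harmonic]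

theorem sum_range_one_div_natCast_div_add {p q : ℕ} (hpq : p < q) {ζ : ℂ}
    (hζ : IsPrimitiveRoot ζ q) (n : ℕ) :
    ∑ k ∈ range n, 1 / ((p : ℂ) / q + k) = ∑ m ∈ range (q * n), (m : ℂ)⁻¹ +
      ∑ j ∈ Ico 1 q, (ζ ^ p)⁻¹ ^ j * ∑ m ∈ range (q * n), (ζ ^ j) ^ m / m := by
  have hq : 0 < q := by omega
  have hterm (k : ℕ) : 1 / ((p : ℂ) / q + k) = q * ((q * k + p : ℕ) : ℂ)⁻¹ := by
    have hq' : (q : ℂ) ≠ 0 := Nat.cast_ne_zero.2 hq.ne'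
    rw [div_add' _ _ _ hq', one_div_div, div_eq_mul_inv]
    push_cast
    ring_nf
  simp_rw [hterm, ← mul_sum, mul_sum_range_eq_sum_inv_pow_mul hζ hpq fun m => (m : ℂ)⁻¹,
    ← div_eq_mul_inv]
  rw [range_eq_Ico, sum_eq_sum_Ico_succ_bot hq]
  simp

theorem digamma_natCast_div_eq_sum_log {p q : ℕ} (hp : 0 < p) (hpq : p < q) {ζ : ℂ}
    (hζ : IsPrimitiveRoot ζ q) :
    (digamma (p / q) : ℂ) = -eulerMascheroniConstant - log q +
      ∑ j ∈ Ico 1 q, (ζ ^ p)⁻¹ ^ j * Complex.log (1 - ζ ^ j) := by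
  have hq : 0 < q := hp.trans hpq
  have hqn : Tendsto (fun n : ℕ => q * n) atTop atTop := tendsto_id.const_mul_atTop' hq
  have hdigamma := (Complex.continuous_ofReal.tendsto _).comp
    (tendsto_log_sub_sum_range_one_div (x := p / q) (by positivity))
  have hharmonic := (Complex.continuous_ofReal.tendsto _).comp
    (tendsto_sum_range_inv_sub_log.comp hqn)
  have hlog : ∀ j ∈ Ico 1 q, Tendsto
      (fun n : ℕ => (ζ ^ p)⁻¹ ^ j * ∑ m ∈ range (q * n), (ζ ^ j) ^ m / m) atTop
      (𝓝 ((ζ ^ p)⁻¹ ^ j * -Complex.log (1 - ζ ^ j))) := fun j hj => by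
    obtain ⟨hj0, hjq⟩ := mem_Ico.1 hj
    have hnorm : ‖ζ ^ j‖ = 1 := by rw [norm_pow, hζ.norm'_eq_one hq.ne', one_pow]
    have hne : ζ ^ j ≠ 1 := hζ.pow_ne_one_of_pos_of_lt (by omega) hjq
    exact ((tendsto_sum_range_pow_div hnorm.le hne).comp hqn).const_mul _
  have hsum := (hharmonic.neg.sub_const (log q : ℂ)).sub (tendsto_finsetSum _ hlog)
  simp_rw [mul_neg, sum_neg_distrib, sub_neg_eq_add] at hsum
  refine tendsto_nhds_unique hdigamma (hsum.congr' ?_)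
  filter_upwards [eventually_ne_atTop 0] with n hn
  have hlog_mul : log (q * n : ℕ) = log q + log n := by
    rw [Nat.cast_mul, log_mul (by positivity) (by positivity)]
  simp only [Function.comp_apply, hlog_mul]
  push_cast
  rw [sum_range_one_div_natCast_div_add hpq hζ]
  ring

theorem one_sub_exp_two_mul_I (z : ℂ) :
    1 - Complex.exp (2 * z * Complex.I) =
      2 * Complex.sin z * Complex.exp ((z - π / 2) * Complex.I) := by
  have hexp : Complex.exp ((z - π / 2) * Complex.I) = Complex.exp (z * Complex.I) * -Complex.I := by
    rw [sub_mul, Complex.exp_sub, Complex.exp_pi_div_two_mul_I, Complex.div_I, mul_neg]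
  have hinv : Complex.exp (-z * Complex.I) * Complex.exp (z * Complex.I) = 1 := by
    rw [← Complex.exp_add, neg_mul, neg_add_cancel, Complex.exp_zero]
  have hsq : Complex.exp (2 * z * Complex.I) = Complex.exp (z * Complex.I) ^ 2 := by
    rw [← Complex.exp_nat_mul]
    ring_nf
  rw [hexp, hsq, Complex.sin]
  linear_combination (1 - Complex.exp (z * Complex.I) ^ 2) * Complex.I_sq + Complex.I ^ 2 * hinv

theorem log_one_sub_exp_two_mul_I {θ : ℝ} (h0 : 0 < θ) (hπ : θ < π) :
    Complex.log (1 - Complex.exp (2 * θ * Complex.I)) =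
      log 2 + log (sin θ) + (θ - π / 2) * Complex.I := by
  have hsin : 0 < sin θ := sin_pos_of_pos_of_lt_pi h0 hπ
  have harg : Complex.log (Complex.exp ((θ - π / 2) * Complex.I)) = (θ - π / 2) * Complex.I := by
    apply Complex.log_exp <;> simp <;> linarith
  have hcast : 2 * Complex.sin θ = (2 * sin θ : ℝ) := by push_cast; rfl
  rw [one_sub_exp_two_mul_I, hcast, Complex.log_ofReal_mul (by positivity) (Complex.exp_ne_zero _),
    harg, log_mul two_ne_zero hsin.ne', Complex.ofReal_add]

theorem one_half_add_inv_inv_exp_sub_one {z : ℂ} (hz : Complex.exp (2 * z * Complex.I) ≠ 1) :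
    1 / 2 + ((Complex.exp (2 * z * Complex.I))⁻¹ - 1)⁻¹ = Complex.cot z / 2 * Complex.I := by
  have hsub : 1 - Complex.exp (2 * z * Complex.I) ≠ 0 := sub_ne_zero.2 hz.symm
  have hinv : ((Complex.exp (2 * z * Complex.I))⁻¹ - 1)⁻¹ =
      Complex.exp (2 * z * Complex.I) / (1 - Complex.exp (2 * z * Complex.I)) := by
    rw [← inv_div, sub_div, div_self (Complex.exp_ne_zero _), one_div]
  rw [hinv, Complex.cot_eq_exp_ratio, mul_right_comm 2 Complex.I z]
  field_simp
  ring

theorem sum_pow_mul_log_one_sub_exp {w : ℂ} {q : ℕ} (hq : 0 < q) (hw : w ≠ 1) (hwq : w ^ q = 1) :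
    ∑ j ∈ Ico 1 q, w ^ j * Complex.log (1 - Complex.exp (2 * (π * j / q : ℝ) * Complex.I)) =
      ∑ j ∈ Ico 1 q, w ^ j * log (sin (π * j / q)) - log 2 +
        π * Complex.I * (1 / 2 + (w - 1)⁻¹) := by
  have hq' : (q : ℂ) ≠ 0 := Nat.cast_ne_zero.2 hq.ne'
  have hterm : ∀ j ∈ Ico 1 q,
      w ^ j * Complex.log (1 - Complex.exp (2 * (π * j / q : ℝ) * Complex.I)) =
        w ^ j * log (sin (π * j / q)) + (log 2 - π / 2 * Complex.I) * w ^ j +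
          π * Complex.I / q * (j * w ^ j) := fun j hj => by
    obtain ⟨hj0, hjq⟩ := mem_Ico.1 hj
    have hpos : 0 < π * j / q := by positivity
    have hlt : π * j / q < π := by
      rw [mul_div_assoc]
      exact mul_lt_of_lt_one_right pi_pos ((div_lt_one (by positivity)).2 (by exact_mod_cast hjq))
    rw [log_one_sub_exp_two_mul_I hpos hlt]
    push_cast
    ring
  rw [sum_congr rfl hterm, sum_add_distrib, sum_add_distrib, ← mul_sum, ← mul_sum,
    sum_Ico_one_pow hq hw hwq, sum_Ico_one_natCast_mul_pow hw hwq, div_mul_div_cancel₀ hq']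
  ring

theorem digamma_natCast_div {p q : ℕ} (hp : 0 < p) (hpq : p < q) :
    digamma (p / q) = -eulerMascheroniConstant - log (2 * q) - π / 2 * cot (π * p / q) +
      ∑ j ∈ Ico 1 q, cos (2 * π * j * p / q) * log (sin (π * j / q)) := by
  have hq : 0 < q := hp.trans hpq
  have hζ := Complex.isPrimitiveRoot_exp q hq.ne'
  set ζ := Complex.exp (2 * π * Complex.I / q) with hζ_def
  have hpow (j : ℕ) : ζ ^ j = Complex.exp (2 * (π * j / q : ℝ) * Complex.I) := by
    rw [hζ_def, ← Complex.exp_nat_mul]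
    push_cast
    ring_nf
  have hζp : ζ ^ p ≠ 1 := hζ.pow_ne_one_of_pos_of_lt hp.ne' hpq
  have hroot : (ζ ^ p)⁻¹ ^ q = 1 := by
    rw [inv_pow, pow_right_comm, hζ.pow_eq_one, one_pow, inv_one]
  have hcot : π * Complex.I * (1 / 2 + ((ζ ^ p)⁻¹ - 1)⁻¹) = (-(π / 2 * cot (π * p / q)) : ℝ) := by
    rw [hpow p, one_half_add_inv_inv_exp_sub_one (hpow p ▸ hζp), ← Complex.ofReal_cot]
    push_cast
    linear_combination (π * Complex.cot (π * p / q) / 2) * Complex.I_sq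
  have hre (j : ℕ) : ((ζ ^ p)⁻¹ ^ j).re = cos (2 * π * j * p / q) := by
    have hexp : (ζ ^ p)⁻¹ ^ j = Complex.exp ((-(2 * π * j * p / q) : ℝ) * Complex.I) := by
      rw [hpow, ← Complex.exp_neg, ← Complex.exp_nat_mul]
      push_cast
      ring_nf
    rw [hexp, Complex.exp_ofReal_mul_I_re, cos_neg]
  have h := digamma_natCast_div_eq_sum_log hp hpq hζ
  simp_rw [hpow _, ← hpow p] at h
  rw [sum_pow_mul_log_one_sub_exp hq (by simpa using hζp) hroot, hcot] at h
  replace h := congrArg Complex.re h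
  simp only [Complex.add_re, Complex.sub_re, Complex.neg_re, Complex.ofReal_re, Complex.re_sum,
    Complex.re_mul_ofReal, hre] at h
  rw [h, log_mul two_ne_zero (by positivity)]
  ring

theorem cot_pi_div_eight : cot (π / 8) = 1 + √2 := by
  have hsin : 0 < sin (π / 8) := sin_pos_of_pos_of_lt_pi (by positivity) (by linarith [pi_pos])
  have hsin_two : 2 * sin (π / 8) * cos (π / 8) = √2 / 2 := by
    rw [← sin_two_mul, ← sin_pi_div_four]
    ring_nf
  have hcos_two : 2 * cos (π / 8) ^ 2 - 1 = √2 / 2 := by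
    rw [← cos_two_mul, ← cos_pi_div_four]
    ring_nf
  have hcos : cos (π / 8) ≠ 0 :=
    (cos_pos_of_mem_Ioo ⟨by linarith [pi_pos], by linarith [pi_pos]⟩).ne'
  rw [cot_eq_cos_div_sin, div_eq_iff hsin.ne']
  refine mul_left_cancel₀ hcos ?_
  have hsq := Real.sq_sqrt (zero_le_two (α := ℝ))
  linear_combination hcos_two / 2 - (1 + √2) / 2 * hsin_two - hsq / 4

theorem sum_cos_mul_log_sin_pi_div_eight :
    ∑ j ∈ Ico (1 : ℕ) 8, cos (2 * π * j / 8) * log (sin (π * j / 8)) = -(√2 * log (1 + √2)) := by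
  have hreflect (x : ℝ) : cos (2 * π * (8 - x) / 8) * log (sin (π * (8 - x) / 8)) =
      cos (2 * π * x / 8) * log (sin (π * x / 8)) := by
    rw [← cos_two_pi_sub, ← sin_pi_sub]
    ring_nf
  have hfive := hreflect 3
  have hsix := hreflect 2
  have hseven := hreflect 1
  have hcos_one : cos (2 * π / 8) = √2 / 2 := by rw [← cos_pi_div_four]; ring_nf
  have hcos_two : cos (2 * π * 2 / 8) = 0 := by rw [← cos_pi_div_two]; ring_nf
  have hcos_three : cos (2 * π * 3 / 8) = -(√2 / 2) := by
    rw [← cos_pi_div_four, ← cos_pi_sub]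
    ring_nf
  have hsin_three : sin (π * 3 / 8) = cos (π / 8) := by rw [← sin_pi_div_two_sub]; ring_nf
  have hsin_four : sin (π * 4 / 8) = 1 := by rw [← sin_pi_div_two]; ring_nf
  have hsin : 0 < sin (π / 8) := sin_pos_of_pos_of_lt_pi (by positivity) (by linarith [pi_pos])
  have hcos : 0 < cos (π / 8) := cos_pos_of_mem_Ioo ⟨by linarith [pi_pos], by linarith [pi_pos]⟩
  rw [← cot_pi_div_eight, cot_eq_cos_div_sin, log_div hcos.ne' hsin.ne']
  norm_num only [sum_Ico_succ_top, Ico_self, sum_empty, mul_one, Nat.cast_ofNat]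
    at hfive hsix hseven ⊢
  rw [hfive, hsix, hseven, hcos_one, hcos_two, hcos_three, hsin_three, hsin_four, log_one]
  ring

theorem digamma_one_eighth :
    digamma (1 / 8) =
      -Real.eulerMascheroniConstant - (1 + Real.sqrt 2) * (Real.pi / 2)
        - 4 * Real.log 2 - Real.sqrt 2 * Real.log (1 + Real.sqrt 2) := by
  have hGauss := digamma_natCast_div one_pos (show 1 < 8 by norm_num)
  have hlog : log (2 * 8) = 4 * log 2 := by
    rw [show (2 * 8 : ℝ) = 2 ^ 4 by norm_num, log_pow]
    norm_num
  simp only [Nat.cast_one, Nat.cast_ofNat, mul_one] at hGauss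
  rw [hGauss, hlog, cot_pi_div_eight, sum_cos_mul_log_sin_pi_div_eight]
  ring
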